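/- arXiv:1805.11701 — 10 statements merged into one kernel-verified Lean document; each statement's English description precedes it below -/
import Mathlib

section
/- Let n ≥ 1, let Y be a real symmetric positive definite n×n matrix and let σ be a real number. Then there exists a unique symmetric positive definite n×n matrix X satisfying X² + σ²X = Y, namely X = (Y + (σ⁴/4)I)^{1/2} − (σ²/2)I, where (·)^{1/2} denotes the unique positive semidefinite square root and I is the identity matrix. -/
/-!
Completing the square turns `x² + 2cx = y` into `(x + c)² = y + c²`. For a real number `l` with
`l (l + 2c) > 0`, the conditions `l > 0` and `l + c ≥ 0` are equivalent, because the factors `l`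
and `l + 2c` have the same sign and their sum is `2 (l + c)`. Applied to the spectrum of `x`, this
says that for strictly positive `y` the strictly positive solutions of the first equation are
exactly the solutions of the second one with `x + c ≥ 0`, that is, with `x + c` the nonnegative
square root of `y + c²`.
-/

section Algebra

variable {R A : Type*} [CommRing R] [Ring A] [Algebra R A] (c : R)

lemma add_smul_one_sq (x : A) : (x + c • 1) ^ 2 = x ^ 2 + (2 * c) • x + c ^ 2 • 1 := by
  simp only [sq, add_mul, mul_add, smul_mul_assoc, mul_smul_comm, one_mul, mul_one]
  module

lemma sq_add_two_mul_smul_eq_iff {x y : A} :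
    x ^ 2 + (2 * c) • x = y ↔ (x + c • 1) ^ 2 = y + c ^ 2 • 1 := by
  rw [add_smul_one_sq, add_left_inj]

lemma spectrum_add_smul_one (x : A) :
    spectrum R (x + c • 1) = (· + c) '' spectrum R x := by
  rw [← Algebra.algebraMap_eq_smul_one, ← spectrum.add_singleton_eq, Set.add_singleton]

end Algebra

lemma sq_add_mul_mem_spectrum {𝕜 A : Type*} [Field 𝕜] [Ring A] [Algebra 𝕜 A] {x : A} {l : 𝕜}
    (b : 𝕜) (hl : l ∈ spectrum 𝕜 x) : l ^ 2 + b * l ∈ spectrum 𝕜 (x ^ 2 + b • x) := by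
  have h := spectrum.subset_polynomial_aeval x (.X ^ 2 + .C b * .X) (Set.mem_image_of_mem _ hl)
  simpa [Algebra.smul_def] using h

lemma pos_iff_add_nonneg_of_sq_add_two_mul_pos {R : Type*} [CommRing R] [LinearOrder R]
    [IsStrictOrderedRing R] {l c : R} (h : 0 < l ^ 2 + 2 * c * l) : 0 < l ↔ 0 ≤ l + c := by
  have hmul : 0 < l * (l + 2 * c) := by linear_combination h
  rcases pos_and_pos_or_neg_and_neg_of_mul_pos hmul with ⟨hl, hlc⟩ | ⟨hl, hlc⟩
  · exact iff_of_true hl (by linarith)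
  · exact iff_of_false hl.not_gt (by linarith)

section FunctionalCalculus

variable {A : Type*} [PartialOrder A] [Ring A] [StarRing A] [TopologicalSpace A]
  [StarOrderedRing A] [Algebra ℝ A] [StarModule ℝ A]
  [ContinuousFunctionalCalculus ℝ A IsSelfAdjoint] [NonnegSpectrumClass ℝ A] {x y s : A} {c : ℝ}

lemma isStrictlyPositive_iff_nonneg_add_smul_one
    (h : IsStrictlyPositive (x ^ 2 + (2 * c) • x)) :
    IsStrictlyPositive x ↔ 0 ≤ x + c • 1 := by
  have hc : IsSelfAdjoint (c • (1 : A)) := (IsSelfAdjoint.all c).smul (.one A)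
  suffices IsSelfAdjoint x → (IsStrictlyPositive x ↔ 0 ≤ x + c • 1) from
    ⟨fun hx ↦ (this hx.isSelfAdjoint).1 hx, fun hx ↦
      (this (by simpa using hx.isSelfAdjoint.sub hc)).2 hx⟩
  intro hx
  rw [StarOrderedRing.isStrictlyPositive_iff_spectrum_pos (R := ℝ) x,
    StarOrderedRing.nonneg_iff_spectrum_nonneg (R := ℝ) (x + c • 1) (hx.add hc),
    spectrum_add_smul_one, Set.forall_mem_image]
  exact forall₂_congr fun l hl ↦ pos_iff_add_nonneg_of_sq_add_two_mul_pos
    (h.spectrum_pos (sq_add_mul_mem_spectrum _ hl))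

variable [IsSemitopologicalRing A] [T2Space A]

lemma isStrictlyPositive_and_sq_add_two_mul_smul_eq_iff (hy : IsStrictlyPositive y) (hs : 0 ≤ s)
    (hs_sq : s ^ 2 = y + c ^ 2 • 1) :
    IsStrictlyPositive x ∧ x ^ 2 + (2 * c) • x = y ↔ x = s - c • 1 := calc
  _ ↔ 0 ≤ x + c • 1 ∧ x ^ 2 + (2 * c) • x = y :=
    and_congr_left fun h ↦ isStrictlyPositive_iff_nonneg_add_smul_one (h ▸ hy)
  _ ↔ 0 ≤ x + c • 1 ∧ (x + c • 1) ^ 2 = s ^ 2 := by rw [sq_add_two_mul_smul_eq_iff, hs_sq]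
  _ ↔ 0 ≤ x + c • 1 ∧ x + c • 1 = s := and_congr_right fun h ↦ CFC.sq_eq_sq_iff _ _ h hs
  _ ↔ x + c • 1 = s := and_iff_right_of_imp fun h ↦ h ▸ hs
  _ ↔ x = s - c • 1 := eq_sub_iff_add_eq.symm

theorem stmt_0_general (hy : IsStrictlyPositive y) (hs : 0 ≤ s)
    (hs_sq : s ^ 2 = y + c ^ 2 • 1) :
    (∃! x : A, IsStrictlyPositive x ∧ x ^ 2 + (2 * c) • x = y) ∧
    IsStrictlyPositive (s - c • 1) ∧ (s - c • 1) ^ 2 + (2 * c) • (s - c • 1) = y := by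
  have solution_iff (x : A) : IsStrictlyPositive x ∧ x ^ 2 + (2 * c) • x = y ↔ x = s - c • 1 :=
    isStrictlyPositive_and_sq_add_two_mul_smul_eq_iff hy hs hs_sq
  exact ⟨⟨_, (solution_iff _).2 rfl, fun x ↦ (solution_iff x).1⟩, (solution_iff _).2 rfl⟩

end FunctionalCalculus

/-- Let `n ≥ 1`, let `Y` be a real symmetric positive definite `n×n` matrix
and let `σ` be a real number.  Then there exists a unique symmetric positive definite matrix
`X` with `X² + σ²X = Y`, namely `X = (Y + (σ⁴/4)•I)^{1/2} − (σ²/2)•I`, where the square root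
is the unique positive semidefinite square root (here parametrized by `S`). -/
theorem stmt_0 (n : ℕ) (hn : 1 ≤ n) (Y : Matrix (Fin n) (Fin n) ℝ) (σ : ℝ)
    (hY : Y.PosDef)
    (S : Matrix (Fin n) (Fin n) ℝ) (hS : S.PosSemidef)
    (hS2 : S ^ 2 = Y + (σ ^ 4 / 4) • 1) :
    (∃! X : Matrix (Fin n) (Fin n) ℝ, X.PosDef ∧ X ^ 2 + σ ^ 2 • X = Y) ∧
    (S - (σ ^ 2 / 2) • 1).PosDef ∧
    (S - (σ ^ 2 / 2) • 1) ^ 2 + σ ^ 2 • (S - (σ ^ 2 / 2) • 1) = Y := by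
  have hsq : (σ ^ 2 / 2) ^ 2 = σ ^ 4 / 4 := by ring
  have htwo : 2 * (σ ^ 2 / 2) = σ ^ 2 := by ring
  open scoped MatrixOrder in
  have h := stmt_0_general (c := σ ^ 2 / 2) hY.isStrictlyPositive hS.nonneg (hsq ▸ hS2)
  simp only [Matrix.isStrictlyPositive_iff_posDef, htwo] at h
  exact h
end

section
/- Let P₀, P₁ be symmetric positive definite n×n matrices and σ a real number. Define Π₀ = I − P₀^{−1/2} ( (P₀^{1/2} P₁ P₀^{1/2} + (σ⁴/4) I)^{1/2} − (σ²/2) I ) P₀^{−1/2}, and for t ∈ ℝ define P_t = (I − Π₀ t) P₀ (I − Π₀ t) + σ² (t I − Π₀ t²). Then P_t equals P₀ at t = 0 and equals P₁ at t = 1. -/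
/-!
Put `c = σ² / 2`. Subtracting `c` from the square root `S` completes the square: `T = S - c`
solves the quadratic equation `T² + 2 c T = P₀^{1/2} P₁ P₀^{1/2}`. Conjugating by `P₀^{-1/2}` turns
it into the Riccati equation `X P₀ X + σ² X = P₁` for `X = I - Π₀`, and the left-hand side is the
value of the path at `t = 1`. The same computation goes through for any factorization `P₀ = a b`
into units, such as a Cholesky factorization, with `b P₁ a` in place of `P₀^{1/2} P₁ P₀^{1/2}`.
-/

theorem units_sandwich_mul_mul_sandwich {M : Type*} [Monoid M] (a b : Mˣ) (x y : M) :
    (↑b⁻¹ * x * ↑a⁻¹) * (a * b) * (↑b⁻¹ * y * ↑a⁻¹) = ↑b⁻¹ * (x * y) * ↑a⁻¹ := by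
  simp only [mul_assoc, Units.inv_mul_cancel_left, Units.mul_inv_cancel_left]

section Riccati

variable {R A : Type*} [CommRing R] [Ring A] [Algebra R A]

theorem sub_smul_one_sq_add_two_mul_smul (s : A) (c : R) :
    (s - c • 1) ^ 2 + (2 * c) • (s - c • 1) = s ^ 2 - c ^ 2 • 1 := by
  simp only [pow_two, sub_mul, mul_sub, smul_mul_assoc, mul_smul_comm, one_mul, mul_one]
  module

theorem riccati_of_sq_add_smul_eq {a b : Aˣ} {t p : A} {ε : R}
    (ht : t ^ 2 + ε • t = b * p * a) :
    (↑b⁻¹ * t * ↑a⁻¹) * (a * b) * (↑b⁻¹ * t * ↑a⁻¹) + ε • (↑b⁻¹ * t * ↑a⁻¹) = p :=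
  calc
    _ = ↑b⁻¹ * (t ^ 2 + ε • t) * ↑a⁻¹ := by
      rw [units_sandwich_mul_mul_sandwich, ← pow_two, mul_add, add_mul, mul_smul_comm,
        smul_mul_assoc]
    _ = p := by
      rw [ht, mul_assoc (b : A), Units.inv_mul_cancel_left, Units.mul_inv_cancel_right]

theorem stmt_2_general {P₀ P₁ S Pi0 : A} {c : R} {P : R → A} (a b : Aˣ) (hab : a * b = P₀)
    (hS : S ^ 2 = b * P₁ * a + c ^ 2 • 1)
    (hPi0 : Pi0 = 1 - ↑b⁻¹ * (S - c • 1) * ↑a⁻¹)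
    (hP : ∀ t, P t = (1 - t • Pi0) * P₀ * (1 - t • Pi0)
      + (2 * c) • (t • (1 : A) - t ^ 2 • Pi0)) :
    P 0 = P₀ ∧ P 1 = P₁ := by
  have quadratic : (S - c • 1) ^ 2 + (2 * c) • (S - c • 1) = b * P₁ * a := by
    rw [sub_smul_one_sq_add_two_mul_smul, hS, add_sub_cancel_right]
  have one_sub_Pi0 : 1 - Pi0 = ↑b⁻¹ * (S - c • 1) * ↑a⁻¹ := by rw [hPi0, sub_sub_cancel]
  constructor
  · simp [hP]
  · rw [hP, one_pow, one_smul, one_smul, one_sub_Pi0, ← hab]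
    exact riccati_of_sq_add_smul_eq quadratic

end Riccati

/-- With `P₀, P₁` symmetric positive definite, `σ` real,
`Q = P₀^{1/2}`, `S = (P₀^{1/2} P₁ P₀^{1/2} + (σ⁴/4)I)^{1/2}`,
`Π₀ = I − P₀^{−1/2}(S − (σ²/2)I)P₀^{−1/2}`, and
`P t = (I − tΠ₀) P₀ (I − tΠ₀) + σ²(t I − t² Π₀)`, the path `P` equals `P₀` at `t = 0`
and `P₁` at `t = 1`. -/
theorem stmt_2 (n : ℕ) (P₀ P₁ : Matrix (Fin n) (Fin n) ℝ) (σ : ℝ)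
    (hP₀ : P₀.PosDef) (hP₁ : P₁.PosDef)
    (Q : Matrix (Fin n) (Fin n) ℝ) (hQ : Q.PosDef) (hQ2 : Q ^ 2 = P₀)
    (S : Matrix (Fin n) (Fin n) ℝ) (hS : S.PosSemidef)
    (hS2 : S ^ 2 = Q * P₁ * Q + (σ ^ 4 / 4) • 1)
    (Pi0 : Matrix (Fin n) (Fin n) ℝ)
    (hPi0 : Pi0 = 1 - Q⁻¹ * (S - (σ ^ 2 / 2) • 1) * Q⁻¹)
    (P : ℝ → Matrix (Fin n) (Fin n) ℝ)
    (hP : ∀ t : ℝ, P t = (1 - t • Pi0) * P₀ * (1 - t • Pi0)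
      + σ ^ 2 • (t • (1 : Matrix (Fin n) (Fin n) ℝ) - t ^ 2 • Pi0)) :
    P 0 = P₀ ∧ P 1 = P₁ := by
  obtain ⟨u, rfl⟩ := hQ.isUnit
  exact stmt_2_general (Pi0 := Pi0) (c := σ ^ 2 / 2) u u (by rw [← hQ2, pow_two])
    (by rw [hS2]; ring_nf) (by rwa [Matrix.coe_units_inv])
    (by rwa [mul_div_cancel₀ (σ ^ 2) two_ne_zero])
end

section
/- Let P₀ be a symmetric n×n matrix, σ a real number, and Π₀ a symmetric n×n matrix such that I − Π₀ t is invertible for all t in an open interval J containing [0,1]. Define P_t = (I − Π₀ t) P₀ (I − Π₀ t) + σ² (t I − Π₀ t²) and A_t = −Π₀ (I − Π₀ t)^{−1} for t ∈ J. Then for every t ∈ J the derivative of P_t satisfies the matrix differential equation dP_t/dt = A_t P_t + P_t A_tᵀ + σ² I. -/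
open Matrix

/-! Since `A t * (1 - t • Π₀) = -Π₀` and, by transposition, `(1 - t • Π₀) * (A t)ᵀ = -Π₀`, the
factor `M t = 1 - t • Π₀` solves both `dM/dt = A M` and `dM/dt = M Aᵀ`. Hence `M P₀ M` solves the
homogeneous equation `dX/dt = A X + X Aᵀ`, while `t • M t = t • 1 - t ^ 2 • Π₀` is a solution of
`dX/dt = A X + X Aᵀ + 1`. Then `P` is the superposition `M P₀ M + σ ^ 2 • (t • M)`. -/

section NormedAlgebra

variable {𝕜 R : Type*} [NontriviallyNormedField 𝕜] [NormedRing R] [NormedAlgebra 𝕜 R]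
  {a b q : R} {t : 𝕜}

theorem hasDerivAt_one_sub_smul (q : R) (t : 𝕜) :
    HasDerivAt (fun s : 𝕜 => 1 - s • q) (-q) t := by
  simpa only [id, one_smul] using ((hasDerivAt_id t).smul_const q).const_sub 1

theorem hasDerivAt_mul_mul_sylvester {u v : 𝕜 → R} (hu : HasDerivAt u (a * u t) t)
    (hv : HasDerivAt v (v t * b) t) (x : R) :
    HasDerivAt (fun s => u s * x * v s) (a * (u t * x * v t) + u t * x * v t * b) t := by
  simpa only [mul_assoc] using (hu.mul_const x).fun_mul hv

theorem hasDerivAt_smul_one_sub_sq_smul_sylvester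
    (ha : a * (1 - t • q) = -q) (hb : (1 - t • q) * b = -q) :
    HasDerivAt (fun s : 𝕜 => s • (1 : R) - s ^ 2 • q)
      (a * (t • (1 : R) - t ^ 2 • q) + (t • (1 : R) - t ^ 2 • q) * b + 1) t := by
  have factor (s : 𝕜) : s • (1 : R) - s ^ 2 • q = s • (1 - s • q) := by
    rw [smul_sub, smul_smul, sq]
  simp only [factor, mul_smul_comm, smul_mul_assoc, ha, hb]
  exact ((hasDerivAt_id' t).fun_smul (hasDerivAt_one_sub_smul q t)).congr_deriv (by module)

theorem hasDerivAt_mul_mul_add_smul_sylvester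
    (ha : a * (1 - t • q) = -q) (hb : (1 - t • q) * b = -q)
    (x : R) (c : 𝕜) {p : 𝕜 → R}
    (hp : ∀ s, p s = (1 - s • q) * x * (1 - s • q) + c • (s • (1 : R) - s ^ 2 • q)) :
    HasDerivAt p (a * p t + p t * b + c • 1) t := by
  have hM := hasDerivAt_one_sub_smul q t
  have homogeneous := hasDerivAt_mul_mul_sylvester (ha ▸ hM) (hb ▸ hM) x
  have particular := hasDerivAt_smul_one_sub_sq_smul_sylvester ha hb
  rw [funext hp]
  refine (homogeneous.fun_add (particular.fun_const_smul c)).congr_deriv ?_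
  simp only [mul_add, add_mul, mul_smul_comm, smul_mul_assoc, smul_add]
  abel

end NormedAlgebra

theorem stmt_4_general {𝕜 ι : Type*} [NontriviallyNormedField 𝕜] [Fintype ι] [DecidableEq ι]
    {P₀ Pi0 A : Matrix ι ι 𝕜} {c t : 𝕜} {P : 𝕜 → Matrix ι ι 𝕜} (hPi0 : Pi0.IsSymm)
    (hinv : IsUnit (1 - t • Pi0))
    (hP : ∀ s, P s = (1 - s • Pi0) * P₀ * (1 - s • Pi0)
      + c • (s • (1 : Matrix ι ι 𝕜) - s ^ 2 • Pi0))
    (hA : A = -(Pi0 * (1 - t • Pi0)⁻¹)) :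
    HasDerivAt P (A * P t + P t * Aᵀ + c • 1) t := by
  have hdet : IsUnit (1 - t • Pi0).det := (isUnit_iff_isUnit_det _).1 hinv
  have hAM : A * (1 - t • Pi0) = -Pi0 := by
    rw [hA, neg_mul, nonsing_inv_mul_cancel_right _ _ hdet]
  have hM : (1 - t • Pi0).IsSymm := isSymm_one.sub (hPi0.smul t)
  have hMA : (1 - t • Pi0) * Aᵀ = -Pi0 := by
    simpa only [transpose_mul, transpose_neg, hM.eq, hPi0.eq] using congrArg transpose hAM
  -- The topology of this norm is definitionally the entrywise one used in the statement.
  open scoped Matrix.Norms.Operator in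
  exact hasDerivAt_mul_mul_add_smul_sylvester hAM hMA P₀ c hP

/-- Let `P₀` be symmetric, `σ` real, and `Π₀` symmetric such that
`I − tΠ₀` is invertible for all `t` in an open interval `J = (a,b)` containing `[0,1]`.
With `P t = (I − tΠ₀) P₀ (I − tΠ₀) + σ²(t I − t² Π₀)` and `A t = −Π₀ (I − tΠ₀)⁻¹`, the
(entrywise) derivative of `P` satisfies `dP/dt = A P + P Aᵀ + σ² I` on `J`. -/
theorem stmt_4 (n : ℕ) (P₀ Pi0 : Matrix (Fin n) (Fin n) ℝ) (σ a b : ℝ)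
    (hP₀ : P₀.IsSymm) (hPi0 : Pi0.IsSymm)
    (hJ : Set.Icc (0 : ℝ) 1 ⊆ Set.Ioo a b)
    (hinv : ∀ t ∈ Set.Ioo a b, IsUnit ((1 : Matrix (Fin n) (Fin n) ℝ) - t • Pi0))
    (P : ℝ → Matrix (Fin n) (Fin n) ℝ)
    (hP : ∀ t : ℝ, P t = (1 - t • Pi0) * P₀ * (1 - t • Pi0)
      + σ ^ 2 • (t • (1 : Matrix (Fin n) (Fin n) ℝ) - t ^ 2 • Pi0))
    (A : ℝ → Matrix (Fin n) (Fin n) ℝ)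
    (hA : ∀ t : ℝ, A t = -(Pi0 * ((1 : Matrix (Fin n) (Fin n) ℝ) - t • Pi0)⁻¹)) :
    ∀ t ∈ Set.Ioo a b, ∀ i j, HasDerivAt (fun s => P s i j)
      ((A t * P t + P t * (A t)ᵀ + σ ^ 2 • 1) i j) t := by
  intro t ht i j
  exact hasDerivAt_pi.1 (hasDerivAt_pi.1 (stmt_4_general hPi0 (hinv t ht) hP (hA t)) i) j
end

section
/- Let σ be a real number and let J be an open interval. Suppose P_t and Π_t are differentiable n×n-matrix-valued functions on J with P_t invertible for all t ∈ J, satisfying dP_t/dt = −2 P_t Π_t P_t + σ² I and dΠ_t/dt = 2 Π_t P_t Π_t on J. Then P_t is twice differentiable on J and satisfies the second-order matrix differential equation d²P_t/dt² − (dP_t/dt) P_t^{−1} (dP_t/dt) + σ⁴ P_t^{−1} = 0 for all t ∈ J. -/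
open Matrix

/-!
Let `P' = c - x` with `x = r • PQP`, and `Q' = r • QPQ`; the matrix system is the case `r = 2`,
`c = σ ^ 2 • 1`. The product rule gives `x' = r • (P'QP + PQP') + r ^ 2 • PQPQP`. Since
`x P⁻¹ = r • PQ` and `P⁻¹ x = r • QP`, this is `x P⁻¹ P' + P' P⁻¹ x + x P⁻¹ x`, that is,
`(P' + x) P⁻¹ (P' + x) - P' P⁻¹ P'`; as `P' + x = c`, the function `Q`
disappears from `P'' = -x'`.
-/

theorem hasDerivAt_matrix {𝕜 E m n : Type*} [NontriviallyNormedField 𝕜] [AddCommGroup E]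
    [Module 𝕜 E] [TopologicalSpace E] [ContinuousSMul 𝕜 E] {M : 𝕜 → Matrix m n E}
    {M' : Matrix m n E} {t : 𝕜} :
    HasDerivAt M M' t ↔ ∀ i j, HasDerivAt (fun s => M s i j) (M' i j) t := by
  simp only [hasDerivAt_iff_hasFDerivAt, hasFDerivAt_iff_isLittleOTVS]
  exact Asymptotics.isLittleOTVS_pi.trans (forall_congr' fun _ => Asymptotics.isLittleOTVS_pi)

section Riccati

open scoped Ring

/-- The left-hand side is the derivative of `r • (p * q * p)` when `p' = d` and
`q' = r • (q * p * q)`. -/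
theorem smul_riccati_product_rule {R A : Type*} [CommSemiring R] [Ring A] [Algebra R A] {r : R}
    {p : A} (hp : IsUnit p) (q d : A) :
    r • ((d * q + p * r • (q * p * q)) * p + p * q * d) =
      (d + r • (p * q * p)) * p⁻¹ʳ * (d + r • (p * q * p)) - d * p⁻¹ʳ * d := by
  have mul_inverse : r • (p * q * p) * p⁻¹ʳ = r • (p * q) := by
    rw [smul_mul_assoc, Ring.mul_inverse_cancel_right _ _ hp]
  have inverse_mul : p⁻¹ʳ * r • (p * q * p) = r • (q * p) := by
    rw [mul_smul_comm, mul_assoc, Ring.inverse_mul_cancel_left _ _ hp]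
  set x := r • (p * q * p)
  calc
    _ = d * r • (q * p) + r • (p * q) * d + r • (p * q) * x := by
      simp only [x, add_mul, smul_add, smul_mul_assoc, mul_smul_comm, mul_assoc]
      abel
    _ = d * (p⁻¹ʳ * x) + x * p⁻¹ʳ * d + x * p⁻¹ʳ * x := by
      rw [mul_inverse, inverse_mul]
    _ = (d + x) * p⁻¹ʳ * (d + x) - d * p⁻¹ʳ * d := by noncomm_ring

theorem stmt_6_general {𝕜 A : Type*} [NontriviallyNormedField 𝕜] [NormedRing A]
    [NormedAlgebra 𝕜 A] {r : 𝕜} {c : A} {P Q : 𝕜 → A} {t : 𝕜} (hPinv : IsUnit (P t))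
    (hP : HasDerivAt P (-r • (P t * Q t * P t) + c) t)
    (hQ : HasDerivAt Q (r • (Q t * P t * Q t)) t) :
    HasDerivAt (fun s => -r • (P s * Q s * P s) + c)
      ((-r • (P t * Q t * P t) + c) * (P t)⁻¹ʳ * (-r • (P t * Q t * P t) + c)
        - c * (P t)⁻¹ʳ * c) t := by
  have hPQP := (((hP.mul hQ).mul hP).const_smul (-r)).add_const c
  refine hPQP.congr_deriv ?_
  have hc : -r • (P t * Q t * P t) + c + r • (P t * Q t * P t) = c := by module
  rw [Pi.mul_apply, neg_smul r (_ + _), smul_riccati_product_rule hPinv, hc, neg_sub]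

end Riccati

/-- Let `σ` be real and `J = (a,b)` an open interval.  Suppose `P` and `Π`
are differentiable matrix-valued functions on `J` with `P t` invertible, satisfying
`dP/dt = −2 P Π P + σ² I` and `dΠ/dt = 2 Π P Π` on `J` (entrywise derivatives).  Then `P` is
twice differentiable on `J` and satisfies `d²P/dt² − (dP/dt) P⁻¹ (dP/dt) + σ⁴ P⁻¹ = 0`,
i.e. the function `s ↦ −2 P Π P + σ² I` (which is `dP/dt`) has entrywise derivative
`(dP/dt) P⁻¹ (dP/dt) − σ⁴ P⁻¹` on `J`. -/
theorem stmt_6 (n : ℕ) (σ a b : ℝ)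
    (P Q : ℝ → Matrix (Fin n) (Fin n) ℝ)
    (hPinv : ∀ t ∈ Set.Ioo a b, IsUnit (P t))
    (hP : ∀ t ∈ Set.Ioo a b, ∀ i j, HasDerivAt (fun s => P s i j)
      (((-2 : ℝ) • (P t * Q t * P t) + σ ^ 2 • 1) i j) t)
    (hQ : ∀ t ∈ Set.Ioo a b, ∀ i j, HasDerivAt (fun s => Q s i j)
      (((2 : ℝ) • (Q t * P t * Q t)) i j) t) :
    ∀ t ∈ Set.Ioo a b, ∀ i j,
      HasDerivAt
        (fun s => ((-2 : ℝ) • (P s * Q s * P s) + σ ^ 2 • (1 : Matrix (Fin n) (Fin n) ℝ)) i j)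
        ((((-2 : ℝ) • (P t * Q t * P t) + σ ^ 2 • 1) * (P t)⁻¹
            * ((-2 : ℝ) • (P t * Q t * P t) + σ ^ 2 • 1)
          - σ ^ 4 • (P t)⁻¹) i j) t := by
  intro t ht
  open scoped Matrix.Norms.Operator in
  simpa [nonsing_inv_eq_ringInverse, smul_smul, ← pow_add] using
    hasDerivAt_matrix.1 (stmt_6_general (hPinv t ht) (hasDerivAt_matrix.2 (hP t ht))
      (hasDerivAt_matrix.2 (hQ t ht)))
end

section
/- Let σ be a real number and let a, b be nonzero real numbers. Then the function p(t) = a·e^{bt} − (σ⁴/(4ab²))·e^{−bt} satisfies the scalar differential equation p(t)·p''(t) − (p'(t))² + σ⁴ = 0 for all t ∈ ℝ. -/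
/-!
For a sum `f = u + v` of two eigenfunctions of `d/dt` with eigenvalues `b` and `c`, the diagonal
terms of `f f'' - (f')²` cancel and the cross terms give `(b - c)² u v`. If `c = -b`, the product
`u v` is constant, so a prescribed value of `f f'' - (f')²` fixes the product of the amplitudes.
-/

section Eigenfunctions

variable {𝕜 𝔸 : Type*} [NontriviallyNormedField 𝕜] [NormedCommRing 𝔸] [NormedAlgebra 𝕜 𝔸]
  {u v : 𝕜 → 𝔸} {b c : 𝔸}

theorem deriv_add_of_hasDerivAt_mul_self (hu : ∀ t, HasDerivAt u (b * u t) t)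
    (hv : ∀ t, HasDerivAt v (c * v t) t) :
    deriv (fun t ↦ u t + v t) = fun t ↦ b * u t + c * v t :=
  funext fun t ↦ ((hu t).fun_add (hv t)).deriv

theorem deriv_deriv_add_of_hasDerivAt_mul_self (hu : ∀ t, HasDerivAt u (b * u t) t)
    (hv : ∀ t, HasDerivAt v (c * v t) t) :
    deriv (deriv fun t ↦ u t + v t) = fun t ↦ b * (b * u t) + c * (c * v t) := by
  rw [deriv_add_of_hasDerivAt_mul_self hu hv]
  exact deriv_add_of_hasDerivAt_mul_self (fun t ↦ (hu t).const_mul b) fun t ↦ (hv t).const_mul c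

theorem mul_deriv_deriv_sub_deriv_sq_of_hasDerivAt_mul_self
    (hu : ∀ t, HasDerivAt u (b * u t) t) (hv : ∀ t, HasDerivAt v (c * v t) t) (t : 𝕜) :
    (u t + v t) * deriv (deriv fun t ↦ u t + v t) t - deriv (fun t ↦ u t + v t) t ^ 2 =
      (b - c) ^ 2 * (u t * v t) := by
  rw [deriv_deriv_add_of_hasDerivAt_mul_self hu hv, deriv_add_of_hasDerivAt_mul_self hu hv]
  ring

end Eigenfunctions

theorem hasDerivAt_const_mul_exp_mul (A b t : ℝ) :
    HasDerivAt (fun t ↦ A * Real.exp (b * t)) (b * (A * Real.exp (b * t))) t := by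
  rw [mul_left_comm, mul_comm b]
  exact (hasDerivAt_const_mul b).exp.const_mul A

theorem mul_deriv_deriv_sub_deriv_sq_exp_add_exp (A C b c t : ℝ) :
    (A * Real.exp (b * t) + C * Real.exp (c * t)) *
        deriv (deriv fun t ↦ A * Real.exp (b * t) + C * Real.exp (c * t)) t -
      deriv (fun t ↦ A * Real.exp (b * t) + C * Real.exp (c * t)) t ^ 2 =
      (b - c) ^ 2 * (A * C) * Real.exp ((b + c) * t) := by
  rw [mul_deriv_deriv_sub_deriv_sq_of_hasDerivAt_mul_self (hasDerivAt_const_mul_exp_mul A b)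
    (hasDerivAt_const_mul_exp_mul C c), add_mul, Real.exp_add]
  ring

/-- For `σ` real and `a, b` nonzero reals, the function
`p t = a e^{bt} − (σ⁴/(4ab²)) e^{−bt}` satisfies `p p'' − (p')² + σ⁴ = 0` on `ℝ`. -/
theorem stmt_8 (σ a b : ℝ) (ha : a ≠ 0) (hb : b ≠ 0)
    (p : ℝ → ℝ)
    (hp : ∀ t : ℝ, p t = a * Real.exp (b * t)
      - σ ^ 4 / (4 * a * b ^ 2) * Real.exp (-(b * t))) :
    ∀ t : ℝ, p t * deriv (deriv p) t - (deriv p t) ^ 2 + σ ^ 4 = 0 := by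
  intro t
  obtain rfl : p = fun t ↦ a * Real.exp (b * t) +
      -(σ ^ 4 / (4 * a * b ^ 2)) * Real.exp (-b * t) := by
    funext t
    rw [hp, neg_mul, neg_mul, sub_eq_add_neg]
  have amplitude_product :
      (b - -b) ^ 2 * (a * -(σ ^ 4 / (4 * a * b ^ 2))) = -σ ^ 4 := by
    field_simp
    ring
  rw [mul_deriv_deriv_sub_deriv_sq_exp_add_exp, amplitude_product, add_neg_cancel, zero_mul,
    Real.exp_zero, mul_one, neg_add_cancel]
end

section
/- Let p₀, p₁, σ be positive real numbers with |p₁ − p₀| > σ². Then there exists a unique b > 0 satisfying 4(p₁ − p₀e^{−b})(p₁ − p₀e^{b})·b² − σ⁴(e^{b} − e^{−b})² = 0. -/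
/-! After division by `4 b²` the equation reads
`2 p₀ p₁ (cosh b - 1) + σ⁴ (sinh b / b)² = (p₁ - p₀)²`. The left-hand side extends continuously to
`b = 0` with value `σ⁴`. Since `sinh` is convex on `[0, ∞)`, its secant slope `sinh b / b` is
monotone there, so the left-hand side increases strictly from `σ⁴` to infinity, and it attains the
value `(p₁ - p₀)² > σ⁴` exactly once. -/

open Filter Set

lemma existsUnique_gt_eq_of_strictMonoOn {α β : Type*}
    [ConditionallyCompleteLinearOrder α] [TopologicalSpace α] [OrderTopology α] [DenselyOrdered α]
    [LinearOrder β] [TopologicalSpace β] [OrderClosedTopology β] {f : α → β} {a : α} {y : β}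
    (hcont : ContinuousOn f (Ici a)) (hmono : StrictMonoOn f (Ici a))
    (htop : Tendsto f atTop atTop) (hy : f a < y) : ∃! x, a < x ∧ f x = y := by
  obtain ⟨x, hx, hfx⟩ := intermediate_value_Ioi hcont htop hy
  exact ⟨x, ⟨hx, hfx⟩, fun z ⟨hz, hfz⟩ ↦
    hmono.injOn (mem_Ici_of_Ioi hz) (mem_Ici_of_Ioi hx) (hfz.trans hfx.symm)⟩

lemma monotoneOn_dslope_of_convexOn {f : ℝ → ℝ} {s : Set ℝ} {a : ℝ} (hf : ConvexOn ℝ s f)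
    (ha : a ∈ s) (hfa : DifferentiableAt ℝ f a) : MonotoneOn (dslope f a) s := by
  intro x hx y hy hxy
  rcases hxy.eq_or_lt with rfl | hlt
  · exact le_rfl
  rcases eq_or_ne x a with rfl | hxa
  · rw [dslope_same, dslope_of_ne f hlt.ne']
    exact hf.deriv_le_slope hx hy hlt hfa
  rcases eq_or_ne y a with rfl | hya
  · rw [dslope_same, dslope_of_ne f hxa, slope_comm]
    exact hf.slope_le_deriv hx hy hlt hfa
  · rw [dslope_of_ne f hxa, dslope_of_ne f hya]
    exact hf.slope_mono ha ⟨hx, hxa⟩ ⟨hy, hya⟩ hxy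

lemma convexOn_sinh_Ici : ConvexOn ℝ (Ici 0) Real.sinh := by
  refine convexOn_of_deriv2_nonneg' (convex_Ici 0) Real.differentiable_sinh.differentiableOn
    (by simpa only [Real.deriv_sinh] using Real.differentiable_cosh.differentiableOn) fun x hx ↦ ?_
  simpa using hx

lemma tendsto_cosh_atTop : Tendsto Real.cosh atTop atTop := by
  refine tendsto_atTop_mono' _ ?_ tendsto_id
  filter_upwards [eventually_ge_atTop 0] with x hx
  exact (Real.self_le_sinh_iff.2 hx).trans (Real.sinh_lt_cosh x).le

/-- The hyperbolic cardinal sine `sinh x / x`, extended by continuity by `1` at `0`. -/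
noncomputable def sinhc : ℝ → ℝ := dslope Real.sinh 0

lemma sinhc_zero : sinhc 0 = 1 := by simp [sinhc]

lemma mul_sinhc (x : ℝ) : x * sinhc x = Real.sinh x := by
  simpa [sinhc] using sub_smul_dslope Real.sinh 0 x

lemma continuous_sinhc : Continuous sinhc := by
  rw [← continuousOn_univ, sinhc, continuousOn_dslope univ_mem]
  exact ⟨Real.continuous_sinh.continuousOn, Real.differentiable_sinh 0⟩

lemma monotoneOn_sinhc : MonotoneOn sinhc (Ici 0) :=
  monotoneOn_dslope_of_convexOn convexOn_sinh_Ici self_mem_Ici (Real.differentiable_sinh 0)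

lemma sinhc_nonneg {x : ℝ} (hx : 0 ≤ x) : 0 ≤ sinhc x :=
  zero_le_one.trans (sinhc_zero ▸ monotoneOn_sinhc self_mem_Ici hx hx)

lemma strictMonoOn_cosh_sub_one_add_sinhc_sq {c k : ℝ} (hc : 0 < c) (hk : 0 ≤ k) :
    StrictMonoOn (fun b ↦ c * (Real.cosh b - 1) + k * sinhc b ^ 2) (Ici 0) := by
  intro x hx y hy hxy
  have hcosh : Real.cosh x < Real.cosh y := Real.cosh_strictMonoOn hx hy hxy
  have hsinhc : sinhc x ≤ sinhc y := monotoneOn_sinhc hx hy hxy.le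
  have hx_nonneg : 0 ≤ sinhc x := sinhc_nonneg hx
  exact add_lt_add_of_lt_of_le (by gcongr) (by gcongr)

lemma tendsto_cosh_sub_one_add_sinhc_sq_atTop {c k : ℝ} (hc : 0 < c) (hk : 0 ≤ k) :
    Tendsto (fun b ↦ c * (Real.cosh b - 1) + k * sinhc b ^ 2) atTop atTop := by
  have hcosh : Tendsto (fun b ↦ c * (Real.cosh b - 1)) atTop atTop := by
    simpa only [sub_eq_add_neg] using
      (tendsto_atTop_add_const_right _ (-1) tendsto_cosh_atTop).const_mul_atTop hc
  refine tendsto_atTop_mono (fun b ↦ ?_) hcosh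
  exact le_add_of_nonneg_right (mul_nonneg hk (sq_nonneg (sinhc b)))

lemma existsUnique_pos_cosh_sub_one_add_sinhc_sq_eq {c k A : ℝ} (hc : 0 < c) (hk : 0 ≤ k)
    (hA : k < A) : ∃! b : ℝ, 0 < b ∧ c * (Real.cosh b - 1) + k * sinhc b ^ 2 = A := by
  have hcont : Continuous fun b ↦ c * (Real.cosh b - 1) + k * sinhc b ^ 2 := by
    have := continuous_sinhc
    fun_prop
  refine existsUnique_gt_eq_of_strictMonoOn hcont.continuousOn
    (strictMonoOn_cosh_sub_one_add_sinhc_sq hc hk)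
    (tendsto_cosh_sub_one_add_sinhc_sq_atTop hc hk) ?_
  simpa [sinhc_zero] using hA

lemma exponent_equation_iff_cosh_sinhc {p₀ p₁ σ b : ℝ} (hb : b ≠ 0) :
    4 * (p₁ - p₀ * Real.exp (-b)) * (p₁ - p₀ * Real.exp b) * b ^ 2
        - σ ^ 4 * (Real.exp b - Real.exp (-b)) ^ 2 = 0 ↔
      2 * p₀ * p₁ * (Real.cosh b - 1) + σ ^ 4 * sinhc b ^ 2 = (p₁ - p₀) ^ 2 := by
  have hproduct : (p₁ - p₀ * Real.exp (-b)) * (p₁ - p₀ * Real.exp b) =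
      (p₁ - p₀) ^ 2 - 2 * p₀ * p₁ * (Real.cosh b - 1) := by
    have hexp : Real.exp b * Real.exp (-b) = 1 := by
      rw [← Real.exp_add, add_neg_cancel, Real.exp_zero]
    rw [Real.cosh_eq]
    linear_combination p₀ ^ 2 * hexp
  have hdifference : Real.exp b - Real.exp (-b) = 2 * (b * sinhc b) := by
    rw [mul_sinhc, Real.sinh_eq]
    ring
  have hfactor : 4 * (p₁ - p₀ * Real.exp (-b)) * (p₁ - p₀ * Real.exp b) * b ^ 2
        - σ ^ 4 * (Real.exp b - Real.exp (-b)) ^ 2 =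
      4 * b ^ 2 *
        ((p₁ - p₀) ^ 2 - (2 * p₀ * p₁ * (Real.cosh b - 1) + σ ^ 4 * sinhc b ^ 2)) := by
    rw [hdifference]
    linear_combination 4 * b ^ 2 * hproduct
  have hb_sq : 4 * b ^ 2 ≠ 0 := by positivity
  rw [hfactor, mul_eq_zero_iff_left hb_sq, sub_eq_zero, eq_comm]

/-- Let `p₀, p₁, σ` be positive reals with `|p₁ − p₀| > σ²`.  Then there
exists a unique `b > 0` with `4(p₁ − p₀e^{−b})(p₁ − p₀e^{b}) b² − σ⁴(e^{b} − e^{−b})² = 0`. -/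
theorem stmt_11 (p₀ p₁ σ : ℝ) (h0 : 0 < p₀) (h1 : 0 < p₁) (hσ : 0 < σ)
    (h : σ ^ 2 < |p₁ - p₀|) :
    ∃! b : ℝ, 0 < b ∧
      4 * (p₁ - p₀ * Real.exp (-b)) * (p₁ - p₀ * Real.exp b) * b ^ 2
        - σ ^ 4 * (Real.exp b - Real.exp (-b)) ^ 2 = 0 := by
  have hc : 0 < 2 * p₀ * p₁ := by positivity
  have hσ_lt : σ ^ 4 < (p₁ - p₀) ^ 2 :=
    calc σ ^ 4 = (σ ^ 2) ^ 2 := by ring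
      _ < |p₁ - p₀| ^ 2 := by gcongr
      _ = (p₁ - p₀) ^ 2 := sq_abs _
  refine (existsUnique_congr fun b ↦ and_congr_right fun hb ↦ ?_).2
    (existsUnique_pos_cosh_sub_one_add_sinhc_sq_eq hc (by positivity) hσ_lt)
  exact exponent_equation_iff_cosh_sinhc hb.ne'
end

section
/- Let p₀, p₁, σ be positive real numbers with |p₁ − p₀| < σ². Then there exists a unique ω ∈ (0, π) satisfying (σ⁴/ω²)·sin²(ω) + 2p₀p₁·cos(ω) = p₀² + p₁². -/
/-!
For `ω ≠ 0` the left-hand side of the equation is `σ⁴ sinc² ω + 2 p₀ p₁ cos ω`. Strict concavity of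
`sin` on `[0, π]` makes `sinc` strictly decreasing there, from `1` to `0`, and `cos` decreases from
`1` to `-1`. So this function decreases strictly from `σ⁴ + 2 p₀ p₁` to `-2 p₀ p₁`, and
`p₀² + p₁²` lies strictly between these two values: the upper bound is `(p₁ - p₀)² < σ⁴`, the lower
one `0 < (p₀ + p₁)²`.
-/

open Real Set

lemma existsUnique_mem_Ioo_eq_of_injOn {α β : Type*}
    [ConditionallyCompleteLinearOrder α] [DenselyOrdered α] [TopologicalSpace α] [OrderTopology α]
    [LinearOrder β] [TopologicalSpace β] [OrderClosedTopology β] {f : α → β} {a b : α} {c : β}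
    (hab : a ≤ b) (hcont : ContinuousOn f (Icc a b)) (hinj : InjOn f (Ioo a b))
    (hc : c ∈ Ioo (f b) (f a)) : ∃! x, x ∈ Ioo a b ∧ f x = c := by
  obtain ⟨x, hx, rfl⟩ := intermediate_value_Ioo' hab hcont hc
  exact ⟨x, ⟨hx, rfl⟩, fun y ⟨hy, hyx⟩ => hinj hy hx hyx⟩

lemma sinc_pi : sinc π = 0 := by
  rw [sinc_of_ne_zero pi_ne_zero, sin_pi, zero_div]

lemma div_pow_mul_sin_pow {x : ℝ} (hx : x ≠ 0) (A : ℝ) (n : ℕ) :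
    A / x ^ n * sin x ^ n = A * sinc x ^ n := by
  rw [sinc_of_ne_zero hx, div_pow, div_mul_eq_mul_div, mul_div_assoc]

lemma strictAntiOn_sinc : StrictAntiOn sinc (Icc 0 π) := by
  intro x hx y hy hxy
  have hy0 : 0 < y := hx.1.trans_lt hxy
  rw [sinc_of_ne_zero hy0.ne']
  rcases hx.1.eq_or_lt with rfl | hx0
  · rw [sinc_zero, div_lt_one hy0]
    exact sin_lt hy0
  · rw [sinc_of_ne_zero hx0.ne']
    simpa only [sin_zero, sub_zero] using strictConcaveOn_sin_Icc.secant_strict_mono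
      (left_mem_Icc.2 pi_nonneg) hx hy hx0.ne' hy0.ne' hxy

lemma sinc_nonneg_of_mem_Icc {x : ℝ} (hx : x ∈ Icc 0 π) : 0 ≤ sinc x :=
  sinc_pi ▸ strictAntiOn_sinc.antitoneOn hx (right_mem_Icc.2 pi_nonneg) hx.2

lemma strictAntiOn_sinc_pow {n : ℕ} (hn : n ≠ 0) :
    StrictAntiOn (fun x => sinc x ^ n) (Icc 0 π) :=
  (pow_left_strictMonoOn₀ hn).comp_strictAntiOn strictAntiOn_sinc
    fun _ => sinc_nonneg_of_mem_Icc

lemma strictAntiOn_mul_sinc_pow_add_mul_cos {A B : ℝ} (hA : 0 < A) (hB : 0 ≤ B) {n : ℕ}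
    (hn : n ≠ 0) : StrictAntiOn (fun x => A * sinc x ^ n + B * cos x) (Icc 0 π) :=
  ((strictMono_mul_left_of_pos hA).comp_strictAntiOn (strictAntiOn_sinc_pow hn)).add_antitone
    ((monotone_mul_left_of_nonneg hB).comp_antitoneOn antitoneOn_cos)

lemma existsUnique_mul_sinc_pow_add_mul_cos_eq {A B c : ℝ} (hA : 0 < A) (hB : 0 ≤ B) {n : ℕ}
    (hn : n ≠ 0) (hc : c ∈ Ioo (-B) (A + B)) :
    ∃! x, x ∈ Ioo 0 π ∧ A * sinc x ^ n + B * cos x = c :=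
  existsUnique_mem_Ioo_eq_of_injOn (f := fun x => A * sinc x ^ n + B * cos x) pi_nonneg
    (by fun_prop)
    ((strictAntiOn_mul_sinc_pow_add_mul_cos hA hB hn).injOn.mono Ioo_subset_Icc_self)
    (by simpa [sinc_pi, hn] using hc)

/-- Let `p₀, p₁, σ` be positive reals with `|p₁ − p₀| < σ²`.  Then there
exists a unique `ω ∈ (0, π)` with `(σ⁴/ω²) sin²ω + 2p₀p₁ cos ω = p₀² + p₁²`. -/
theorem stmt_12 (p₀ p₁ σ : ℝ) (h0 : 0 < p₀) (h1 : 0 < p₁) (hσ : 0 < σ)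
    (h : |p₁ - p₀| < σ ^ 2) :
    ∃! ω : ℝ, ω ∈ Set.Ioo 0 Real.pi ∧
      σ ^ 4 / ω ^ 2 * Real.sin ω ^ 2 + 2 * p₀ * p₁ * Real.cos ω = p₀ ^ 2 + p₁ ^ 2 := by
  have lower : -(2 * p₀ * p₁) < p₀ ^ 2 + p₁ ^ 2 := by
    have : 0 < (p₀ + p₁) ^ 2 := by positivity
    linarith
  have upper : p₀ ^ 2 + p₁ ^ 2 < σ ^ 4 + 2 * p₀ * p₁ := by
    have : (p₁ - p₀) ^ 2 < (σ ^ 2) ^ 2 := sq_lt_sq' (abs_lt.1 h).1 (abs_lt.1 h).2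
    linarith
  refine (existsUnique_congr fun ω => and_congr_right fun hω => ?_).2
    (existsUnique_mul_sinc_pow_add_mul_cos_eq (pow_pos hσ 4) (by positivity) two_ne_zero
      ⟨lower, upper⟩)
  rw [div_pow_mul_sin_pow hω.1.ne']
end

section
/- Let p₀, p₁, σ be positive real numbers and define φ(b) = 4(p₁ − p₀e^{−b})(p₁ − p₀e^{b})·b² − σ⁴(e^{b} − e^{−b})². Then φ(0) = 0, φ'(0) = 0, φ''(0) = 8((p₁ − p₀)² − σ⁴), and the second derivative φ'' is strictly decreasing on (0, ∞). -/
/-!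
The product `(p₁ - p₀ e⁻ᵇ)(p₁ - p₀ eᵇ)` equals `p₀² + p₁² - 2 p₀ p₁ cosh b`, so `φ` is a linear
combination of `b²`, `b² cosh b` and `sinh² b`. Their second derivatives are `2`,
`(b² + 2) cosh b + 4 b sinh b` and `2 cosh (2 b)`: the last two increase on `[0, ∞)` and
enter `φ''` with negative coefficients.
-/

open Real Set

/-- The function `φ` of the boundary-value problem in hyperbolic form, with arbitrary coefficients;
the endpoints `p₀`, `p₁` and the noise level `σ` give `α = 4 (p₀² + p₁²)`, `β = 8 p₀ p₁` and
`γ = 4 σ⁴`. -/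
noncomputable def hyperbolicForm (α β γ b : ℝ) : ℝ :=
  α * b ^ 2 - β * (b ^ 2 * cosh b) - γ * sinh b ^ 2

theorem sub_mul_exp_neg_mul_sub_mul_exp (p q b : ℝ) :
    (q - p * exp (-b)) * (q - p * exp b) = p ^ 2 + q ^ 2 - 2 * (p * q) * cosh b := by
  have exp_neg_mul_exp : exp (-b) * exp b = 1 := by rw [← exp_add, neg_add_cancel, exp_zero]
  rw [cosh_eq]
  linear_combination p ^ 2 * exp_neg_mul_exp

theorem exp_sub_exp_neg_eq_two_mul_sinh (b : ℝ) : exp b - exp (-b) = 2 * sinh b := by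
  rw [sinh_eq]
  ring

theorem hasDerivAt_sq {𝕜 : Type*} [NontriviallyNormedField 𝕜] (b : 𝕜) :
    HasDerivAt (fun x ↦ x ^ 2) (2 * b) b := by
  simpa using hasDerivAt_pow 2 b

theorem hasDerivAt_sinh_sq (b : ℝ) : HasDerivAt (fun x ↦ sinh x ^ 2) (sinh (2 * b)) b := by
  simpa [sinh_two_mul] using (hasDerivAt_sinh b).fun_pow 2

theorem hasDerivAt_sinh_const_mul (c b : ℝ) :
    HasDerivAt (fun x ↦ sinh (c * x)) (c * cosh (c * b)) b :=
  (hasDerivAt_const_mul c).sinh.congr_deriv (mul_comm _ _)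

theorem hasDerivAt_sq_mul_cosh (b : ℝ) :
    HasDerivAt (fun x ↦ x ^ 2 * cosh x) (2 * b * cosh b + b ^ 2 * sinh b) b :=
  (hasDerivAt_sq b).mul (hasDerivAt_cosh b)

theorem hasDerivAt_two_mul_mul_cosh_add_sq_mul_sinh (b : ℝ) :
    HasDerivAt (fun x ↦ 2 * x * cosh x + x ^ 2 * sinh x)
      ((b ^ 2 + 2) * cosh b + 4 * b * sinh b) b := by
  have hlin : HasDerivAt (fun x : ℝ ↦ 2 * x) 2 b := hasDerivAt_const_mul 2
  refine ((hlin.mul (hasDerivAt_cosh b)).add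
    ((hasDerivAt_sq b).mul (hasDerivAt_sinh b))).congr_deriv ?_
  ring

theorem deriv_hyperbolicForm (α β γ : ℝ) :
    deriv (hyperbolicForm α β γ) = fun b ↦
      α * (2 * b) - β * (2 * b * cosh b + b ^ 2 * sinh b) - γ * sinh (2 * b) :=
  funext fun b ↦ ((((hasDerivAt_sq b).const_mul α).sub
    ((hasDerivAt_sq_mul_cosh b).const_mul β)).sub ((hasDerivAt_sinh_sq b).const_mul γ)).deriv

theorem deriv_deriv_hyperbolicForm (α β γ : ℝ) :
    deriv (deriv (hyperbolicForm α β γ)) = fun b ↦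
      α * 2 - β * ((b ^ 2 + 2) * cosh b + 4 * b * sinh b) - γ * (2 * cosh (2 * b)) := by
  rw [deriv_hyperbolicForm]
  funext b
  have hlin : HasDerivAt (fun x : ℝ ↦ 2 * x) 2 b := hasDerivAt_const_mul 2
  exact (((hlin.const_mul α).sub
    ((hasDerivAt_two_mul_mul_cosh_add_sq_mul_sinh b).const_mul β)).sub
      ((hasDerivAt_sinh_const_mul 2 b).const_mul γ)).deriv

theorem monotoneOn_sq_add_two_mul_cosh_add_mul_sinh :
    MonotoneOn (fun b : ℝ ↦ (b ^ 2 + 2) * cosh b + 4 * b * sinh b) (Ici 0) := by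
  intro x (hx : 0 ≤ x) y (hy : 0 ≤ y) hxy
  have hcosh : cosh x ≤ cosh y := cosh_strictMonoOn.monotoneOn hx hy hxy
  have hsinh : sinh x ≤ sinh y := sinh_le_sinh.2 hxy
  dsimp only
  gcongr

theorem strictMonoOn_cosh_const_mul {c : ℝ} (hc : 0 < c) :
    StrictMonoOn (fun b ↦ cosh (c * b)) (Ici 0) := by
  intro x (hx : 0 ≤ x) y (hy : 0 ≤ y) hxy
  exact cosh_strictMonoOn (mem_Ici.2 (by positivity)) (mem_Ici.2 (by positivity)) (by gcongr)

theorem strictAntiOn_deriv_deriv_hyperbolicForm (α : ℝ) {β γ : ℝ} (hβ : 0 ≤ β) (hγ : 0 < γ) :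
    StrictAntiOn (deriv (deriv (hyperbolicForm α β γ))) (Ici 0) := by
  intro x hx y hy hxy
  have hβ_term := mul_le_mul_of_nonneg_left
    (monotoneOn_sq_add_two_mul_cosh_add_mul_sinh hx hy hxy.le) hβ
  have hγ_term := mul_lt_mul_of_pos_left (strictMonoOn_cosh_const_mul two_pos hx hy hxy) hγ
  simp only [deriv_deriv_hyperbolicForm]
  linarith

/-- Let `p₀, p₁, σ` be positive reals and
`φ b = 4(p₁ − p₀e^{−b})(p₁ − p₀e^{b}) b² − σ⁴(e^{b} − e^{−b})²`.  Then `φ 0 = 0`,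
`φ' 0 = 0`, `φ'' 0 = 8((p₁ − p₀)² − σ⁴)`, and `φ''` is strictly decreasing on `(0, ∞)`. -/
theorem stmt_13 (p₀ p₁ σ : ℝ) (h0 : 0 < p₀) (h1 : 0 < p₁) (hσ : 0 < σ)
    (φ : ℝ → ℝ)
    (hφ : ∀ x : ℝ, φ x = 4 * (p₁ - p₀ * Real.exp (-x)) * (p₁ - p₀ * Real.exp x) * x ^ 2
      - σ ^ 4 * (Real.exp x - Real.exp (-x)) ^ 2) :
    φ 0 = 0 ∧ deriv φ 0 = 0 ∧
    deriv (deriv φ) 0 = 8 * ((p₁ - p₀) ^ 2 - σ ^ 4) ∧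
    StrictAntiOn (deriv (deriv φ)) (Set.Ioi 0) := by
  have hφ_eq : φ = hyperbolicForm (4 * (p₀ ^ 2 + p₁ ^ 2)) (8 * (p₀ * p₁)) (4 * σ ^ 4) := by
    funext b
    rw [hφ, mul_assoc 4, sub_mul_exp_neg_mul_sub_mul_exp, exp_sub_exp_neg_eq_two_mul_sinh,
      hyperbolicForm]
    ring
  subst hφ_eq
  refine ⟨?_, ?_, ?_, ?_⟩
  · simp [hyperbolicForm]
  · simp [deriv_hyperbolicForm]
  · simp only [deriv_deriv_hyperbolicForm, mul_zero, cosh_zero, sinh_zero]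
    ring
  · exact (strictAntiOn_deriv_deriv_hyperbolicForm _ (by positivity) (by positivity)).mono
      Ioi_subset_Ici_self
end

section
/- Let p₀, p₁, σ be positive real numbers and let b be a nonzero real number satisfying 4(p₁ − p₀e^{−b})(p₁ − p₀e^{b})·b² = σ⁴(e^{b} − e^{−b})². Define p(t) = ((p₁ − p₀e^{−b})/(e^{b} − e^{−b}))·e^{bt} + ((p₁ − p₀e^{b})/(e^{−b} − e^{b}))·e^{−bt}. Then p(0) = p₀, p(1) = p₁, and p satisfies the differential equation p(t)·p''(t) − (p'(t))² + σ⁴ = 0 for all t ∈ ℝ. -/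
/-!
A combination `A e^{bt} + B e^{-bt}` has derivative of the same shape, with coefficients `bA` and
`-bB`. Hence `p p'' - (p')²` is the constant `4b²AB`: the `e^{±2bt}` terms cancel and
`e^{bt} e^{-bt} = 1`. The boundary values determine `A` and `B` by Cramer's rule, and the equation
relating `b` to `σ` says exactly that `4b²AB = -σ⁴` for these coefficients.
-/

section Interpolation

variable {K : Type*} [Field K]

/-- The coefficient of the geometric progression `xⁿ` in the sequence `A xⁿ + B yⁿ` that takes the
value `p₀` at `n = 0` and `p₁` at `n = 1`; the coefficient `B` is obtained by exchanging `x` and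
`y`. It has the junk value `0` when `x = y`. -/
def interpolationCoeff (p₀ p₁ x y : K) : K :=
  (p₁ - p₀ * y) / (x - y)

theorem interpolationCoeff_add_swap {x y : K} (hxy : x ≠ y) (p₀ p₁ : K) :
    interpolationCoeff p₀ p₁ x y + interpolationCoeff p₀ p₁ y x = p₀ := by
  have hsub : x - y ≠ 0 := sub_ne_zero.mpr hxy
  rw [interpolationCoeff, interpolationCoeff, ← neg_sub x y, div_neg, ← sub_eq_add_neg, ← sub_div,
    div_eq_iff hsub]
  ring

theorem interpolationCoeff_mul_add_swap_mul {x y : K} (hxy : x ≠ y) (p₀ p₁ : K) :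
    interpolationCoeff p₀ p₁ x y * x + interpolationCoeff p₀ p₁ y x * y = p₁ := by
  have hsub : x - y ≠ 0 := sub_ne_zero.mpr hxy
  rw [interpolationCoeff, interpolationCoeff, ← neg_sub x y, div_neg, neg_mul, ← sub_eq_add_neg,
    div_mul_eq_mul_div, div_mul_eq_mul_div, ← sub_div, div_eq_iff hsub]
  ring

theorem interpolationCoeff_mul_swap (p₀ p₁ x y : K) :
    interpolationCoeff p₀ p₁ x y * interpolationCoeff p₀ p₁ y x =
      -((p₁ - p₀ * y) * (p₁ - p₀ * x) / (x - y) ^ 2) := by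
  rw [interpolationCoeff, interpolationCoeff, ← neg_sub x y, div_neg, mul_neg, div_mul_div_comm,
    ← sq]

end Interpolation

section ExpCombination

open NormedSpace (exp exp_add exp_zero)

variable {𝕜 : Type*} [RCLike 𝕜]

/-- The general solution `t ↦ A e^{bt} + B e^{-bt}` of `p'' = b² p` (when `b ≠ 0`). The exponential
is `NormedSpace.exp`, so that the real and complex cases are treated together. -/
noncomputable def expCombination (b A B t : 𝕜) : 𝕜 :=
  A * exp (b * t) + B * exp (-(b * t))

theorem expCombination_zero (b A B : 𝕜) : expCombination b A B 0 = A + B := by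
  simp [expCombination]

theorem expCombination_one (b A B : 𝕜) :
    expCombination b A B 1 = A * exp b + B * exp (-b) := by
  simp [expCombination]

theorem hasDerivAt_exp_const_mul (b t : 𝕜) :
    HasDerivAt (fun s ↦ exp (b * s)) (b * exp (b * t)) t := by
  simpa [mul_comm] using hasDerivAt_exp_smul_const b t

theorem hasDerivAt_expCombination (b A B t : 𝕜) :
    HasDerivAt (expCombination b A B) (expCombination b (b * A) (-b * B) t) t := by
  have hpos := (hasDerivAt_exp_const_mul b t).const_mul A
  have hneg := (hasDerivAt_exp_const_mul (-b) t).const_mul B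
  simp only [neg_mul] at hneg
  refine (hpos.add hneg).congr_deriv ?_
  rw [expCombination]
  ring

theorem deriv_expCombination (b A B : 𝕜) :
    deriv (expCombination b A B) = expCombination b (b * A) (-b * B) :=
  funext fun t ↦ (hasDerivAt_expCombination b A B t).deriv

theorem expCombination_mul_deriv_deriv_sub_deriv_sq (b A B t : 𝕜) :
    expCombination b A B t * deriv (deriv (expCombination b A B)) t
      - deriv (expCombination b A B) t ^ 2 = 4 * b ^ 2 * (A * B) := by
  have hexp : exp (b * t) * exp (-(b * t)) = 1 := by
    rw [← exp_add, add_neg_cancel, exp_zero]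
  simp only [deriv_expCombination, expCombination]
  linear_combination 4 * b ^ 2 * A * B * hexp

theorem stmt_15_general (p₀ p₁ σ b : 𝕜) (hb : exp b ≠ exp (-b))
    (heq : 4 * (p₁ - p₀ * exp (-b)) * (p₁ - p₀ * exp b) * b ^ 2
      = σ ^ 4 * (exp b - exp (-b)) ^ 2)
    (p : 𝕜 → 𝕜)
    (hp : ∀ t : 𝕜, p t =
      (p₁ - p₀ * exp (-b)) / (exp b - exp (-b)) * exp (b * t)
      + (p₁ - p₀ * exp b) / (exp (-b) - exp b) * exp (-(b * t))) :
    p 0 = p₀ ∧ p 1 = p₁ ∧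
    ∀ t : 𝕜, p t * deriv (deriv p) t - (deriv p t) ^ 2 + σ ^ 4 = 0 := by
  obtain rfl : p = expCombination b (interpolationCoeff p₀ p₁ (exp b) (exp (-b)))
      (interpolationCoeff p₀ p₁ (exp (-b)) (exp b)) := funext hp
  refine ⟨?_, ?_, fun t ↦ ?_⟩
  · rw [expCombination_zero, interpolationCoeff_add_swap hb]
  · rw [expCombination_one, interpolationCoeff_mul_add_swap_mul hb]
  · have hsq : (exp b - exp (-b)) ^ 2 ≠ 0 := pow_ne_zero 2 (sub_ne_zero.mpr hb)
    have hσ := eq_div_of_mul_eq hsq heq.symm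
    rw [expCombination_mul_deriv_deriv_sub_deriv_sq, interpolationCoeff_mul_swap, hσ]
    ring

theorem real_exp_ne_exp_neg {b : ℝ} (hb : b ≠ 0) : exp b ≠ exp (-b) := by
  rw [← Real.exp_eq_exp_ℝ]
  exact Real.exp_injective.ne (self_ne_neg.mpr hb)

end ExpCombination

/-- Let `p₀, p₁, σ` be positive reals and `b ≠ 0` with
`4(p₁ − p₀e^{−b})(p₁ − p₀e^{b}) b² = σ⁴(e^{b} − e^{−b})²`.  Then
`p t = ((p₁ − p₀e^{−b})/(e^{b} − e^{−b})) e^{bt} + ((p₁ − p₀e^{b})/(e^{−b} − e^{b})) e^{−bt}`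
satisfies `p 0 = p₀`, `p 1 = p₁`, and `p p'' − (p')² + σ⁴ = 0` on `ℝ`. -/
theorem stmt_15 (p₀ p₁ σ b : ℝ) (h0 : 0 < p₀) (h1 : 0 < p₁) (hσ : 0 < σ) (hb : b ≠ 0)
    (heq : 4 * (p₁ - p₀ * Real.exp (-b)) * (p₁ - p₀ * Real.exp b) * b ^ 2
      = σ ^ 4 * (Real.exp b - Real.exp (-b)) ^ 2)
    (p : ℝ → ℝ)
    (hp : ∀ t : ℝ, p t =
      (p₁ - p₀ * Real.exp (-b)) / (Real.exp b - Real.exp (-b)) * Real.exp (b * t)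
      + (p₁ - p₀ * Real.exp b) / (Real.exp (-b) - Real.exp b) * Real.exp (-(b * t))) :
    p 0 = p₀ ∧ p 1 = p₁ ∧
    ∀ t : ℝ, p t * deriv (deriv p) t - (deriv p t) ^ 2 + σ ^ 4 = 0 := by
  simp only [Real.exp_eq_exp_ℝ] at heq hp
  exact stmt_15_general p₀ p₁ σ b (real_exp_ne_exp_neg hb) heq p hp
end

section
/- Let σ be a real number, ε a nonzero real number, and let P_t and Π_t be differentiable symmetric-n×n-matrix-valued functions on an open interval J satisfying dP_t/dt = −((1+ε)/(2ε))(Π_t P_t² + P_t² Π_t) + ((1−ε)/ε) P_t Π_t P_t + σ² I and dΠ_t/dt = ((1+ε)/(2ε))(Π_t² P_t + P_t Π_t²) − ((1−ε)/ε) Π_t P_t Π_t on J. Define A_t = −(1/2)(Π_t P_t + P_t Π_t) + (1/(2ε))(P_t Π_t − Π_t P_t). Then for all t ∈ J: dP_t/dt = A_t P_t + P_t A_tᵀ + σ² I and dΠ_t/dt = −Π_t A_t − A_tᵀ Π_t. -/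
open Matrix

/-!
Collecting coefficients, `A = ((1 - ε) / (2ε)) P Π - ((1 + ε) / (2ε)) Π P`. For self-adjoint `P`
and `Π`, taking the adjoint of `A = A(P, Π)` interchanges `P` and `Π`, so
`A P + P Aᵀ = A(P, Π) P + P A(Π, P)`, and `Π A + Aᵀ Π` is the same expression with `P` and `Π`
interchanged. Hence one noncommutative polynomial identity gives both equations.
-/

section Entrywise

variable {m n R : Type*}

theorem isSelfAdjoint_of_isSymm [Star R] [TrivialStar R] {M : Matrix n n R} (hM : M.IsSymm) :
    IsSelfAdjoint M :=
  (conjTranspose_eq_transpose_of_trivial M).trans hM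

theorem hasDerivAt_matrix_iff {𝕜 : Type*} [NontriviallyNormedField 𝕜] [NormedAddCommGroup R]
    [NormedSpace 𝕜 R] [Finite m] [Finite n] {M : 𝕜 → Matrix m n R} {M' : Matrix m n R} {t : 𝕜} :
    HasDerivAt M M' t ↔ ∀ i j, HasDerivAt (fun s => M s i j) (M' i j) t := by
  have := Fintype.ofFinite m
  have := Fintype.ofFinite n
  exact (hasDerivAt_pi (φ := M)).trans (forall_congr' fun _ => hasDerivAt_pi)

end Entrywise

section Algebra

variable {𝕜 E : Type*} [Field 𝕜] [Ring E] [Algebra 𝕜 E]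

/-- The drift `A` of the steered linear system with weight `ε`, as a function of the covariance `p`
and the costate `q` (`P` and `Π` in the paper), in an arbitrary algebra. -/
def steeringDrift (ε : 𝕜) (p q : E) : E :=
  -((1 / 2 : 𝕜) • (q * p + p * q)) + (1 / (2 * ε)) • (p * q - q * p)

theorem star_steeringDrift [StarRing 𝕜] [TrivialStar 𝕜] [StarRing E] [StarModule 𝕜 E] (ε : 𝕜)
    {p q : E} (hp : IsSelfAdjoint p) (hq : IsSelfAdjoint q) :
    star (steeringDrift ε p q) = steeringDrift ε q p := by
  simp only [steeringDrift, star_add, star_neg, star_sub, star_smul, star_mul, star_trivial,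
    hp.star_eq, hq.star_eq, add_comm (p * q)]

variable [NeZero (2 : 𝕜)] {ε : 𝕜}

theorem steeringDrift_eq_smul_sub_smul (hε : ε ≠ 0) (p q : E) :
    steeringDrift ε p q =
      ((1 - ε) / (2 * ε)) • (p * q) - ((1 + ε) / (2 * ε)) • (q * p) := by
  have coeff_sub : (1 - ε) / (2 * ε) = 1 / (2 * ε) - 1 / 2 := by field_simp
  have coeff_add : (1 + ε) / (2 * ε) = 1 / (2 * ε) + 1 / 2 := by field_simp
  rw [steeringDrift, coeff_sub, coeff_add]
  module

theorem steeringDrift_mul_add_mul_steeringDrift_swap (hε : ε ≠ 0) (p q : E) :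
    steeringDrift ε p q * p + p * steeringDrift ε q p =
      ((1 - ε) / ε) • (p * q * p) - ((1 + ε) / (2 * ε)) • (q * p ^ 2 + p ^ 2 * q) := by
  have coeff_double : (1 - ε) / ε = (1 - ε) / (2 * ε) + (1 - ε) / (2 * ε) := by field_simp; ring
  simp only [steeringDrift_eq_smul_sub_smul hε, coeff_double, sub_mul, mul_sub, smul_mul_assoc,
    mul_smul_comm, pow_two, mul_assoc]
  module

end Algebra

theorem stmt_16_general {𝕜 E : Type*} [NontriviallyNormedField 𝕜] [NeZero (2 : 𝕜)]
    [StarRing 𝕜] [TrivialStar 𝕜] [Ring E] [StarRing E] [Algebra 𝕜 E] [StarModule 𝕜 E]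
    [TopologicalSpace E] [ContinuousSMul 𝕜 E] {σ ε t : 𝕜} (hε : ε ≠ 0) {P Q : 𝕜 → E}
    (hPsa : IsSelfAdjoint (P t)) (hQsa : IsSelfAdjoint (Q t))
    (hP : HasDerivAt P ((-((1 + ε) / (2 * ε))) • (Q t * P t ^ 2 + P t ^ 2 * Q t)
      + ((1 - ε) / ε) • (P t * Q t * P t) + σ ^ 2 • (1 : E)) t)
    (hQ : HasDerivAt Q (((1 + ε) / (2 * ε)) • (Q t ^ 2 * P t + P t * Q t ^ 2)
      - ((1 - ε) / ε) • (Q t * P t * Q t)) t) {A : E} (hA : A = steeringDrift ε (P t) (Q t)) :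
    HasDerivAt P (A * P t + P t * star A + σ ^ 2 • (1 : E)) t ∧
      HasDerivAt Q (-(Q t * A) - star A * Q t) t := by
  have star_A : star A = steeringDrift ε (Q t) (P t) := hA ▸ star_steeringDrift ε hPsa hQsa
  have lyapunov := steeringDrift_mul_add_mul_steeringDrift_swap hε (P t) (Q t)
  have adjoint_lyapunov := steeringDrift_mul_add_mul_steeringDrift_swap hε (Q t) (P t)
  rw [← star_A, ← hA] at lyapunov adjoint_lyapunov
  constructor
  · convert! hP using 1
    rw [lyapunov]
    module
  · convert! hQ using 1
    rw [← neg_add', add_comm, adjoint_lyapunov, neg_sub, add_comm (P t * Q t ^ 2)]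

/-- Let `σ` be real, `ε ≠ 0`, and let `P` and `Π` (here `Q`) be
differentiable symmetric-matrix-valued functions on an open interval `J = (a,b)` satisfying
`dP/dt = −((1+ε)/(2ε))(Π P² + P² Π) + ((1−ε)/ε) P Π P + σ² I` and
`dΠ/dt = ((1+ε)/(2ε))(Π² P + P Π²) − ((1−ε)/ε) Π P Π` (entrywise derivatives).
With `A = −(1/2)(Π P + P Π) + (1/(2ε))(P Π − Π P)`, on `J` we have
`dP/dt = A P + P Aᵀ + σ² I` and `dΠ/dt = −Π A − Aᵀ Π`. -/
theorem stmt_16 (n : ℕ) (σ ε a b : ℝ) (hε : ε ≠ 0)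
    (P Q : ℝ → Matrix (Fin n) (Fin n) ℝ)
    (hPsymm : ∀ t ∈ Set.Ioo a b, (P t).IsSymm)
    (hQsymm : ∀ t ∈ Set.Ioo a b, (Q t).IsSymm)
    (hP : ∀ t ∈ Set.Ioo a b, ∀ i j, HasDerivAt (fun s => P s i j)
      (((-((1 + ε) / (2 * ε))) • (Q t * P t ^ 2 + P t ^ 2 * Q t)
        + ((1 - ε) / ε) • (P t * Q t * P t) + σ ^ 2 • (1 : Matrix (Fin n) (Fin n) ℝ)) i j) t)
    (hQ : ∀ t ∈ Set.Ioo a b, ∀ i j, HasDerivAt (fun s => Q s i j)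
      ((((1 + ε) / (2 * ε)) • (Q t ^ 2 * P t + P t * Q t ^ 2)
        - ((1 - ε) / ε) • (Q t * P t * Q t)) i j) t)
    (A : ℝ → Matrix (Fin n) (Fin n) ℝ)
    (hA : ∀ t : ℝ, A t = -((1 / 2 : ℝ) • (Q t * P t + P t * Q t))
      + (1 / (2 * ε)) • (P t * Q t - Q t * P t)) :
    ∀ t ∈ Set.Ioo a b, ∀ i j,
      HasDerivAt (fun s => P s i j) ((A t * P t + P t * (A t)ᵀ + σ ^ 2 • 1) i j) t ∧
      HasDerivAt (fun s => Q s i j) ((-(Q t * A t) - (A t)ᵀ * Q t) i j) t := by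
  intro t ht i j
  have h := stmt_16_general hε (isSelfAdjoint_of_isSymm (hPsymm t ht))
    (isSelfAdjoint_of_isSymm (hQsymm t ht)) (hasDerivAt_matrix_iff.2 (hP t ht))
    (hasDerivAt_matrix_iff.2 (hQ t ht)) (hA t)
  rw [star_eq_conjTranspose, conjTranspose_eq_transpose_of_trivial] at h
  exact ⟨hasDerivAt_matrix_iff.1 h.1 i j, hasDerivAt_matrix_iff.1 h.2 i j⟩
end
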